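/- For every complex number w with Re(w) > 0 and every real c > 0, (1/(2πi)) ∫_{c-i∞}^{c+i∞} Γ(s) w^{-s} ds = e^{-w}, where w^{-s} = exp(-s Log w) with the principal logarithm. -/

import Mathlib

open Complex

/-!
The integral `∫₀^∞ x ^ (s - 1) * exp (-w * x) dx` is holomorphic in `w` for `0 < Re w` and equals
`Γ(s) * w ^ (-s)` for real `w`, hence throughout the half-plane: `Γ(s) * w ^ (-s)` is the Mellin
transform of `x ↦ exp (-w * x)`, and the theorem is Mellin inversion at `x = 1`.

Inversion requires the transform to be integrable on vertical lines. This comes from the same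
formula on the unit circle: for `w = exp (θ * I)` with `|θ| < π / 2`, bounding the integral by its
absolute value gives `Γ(c + t * I) = O(exp (-θ * t))`, whereas `|w ^ (-(c + t * I))|` is a multiple
of `exp (arg w * t)`. Take `θ` slightly above `arg w` for `t → ∞` and slightly below for `t → -∞`.
-/

section Laplace

open MeasureTheory Set Filter Topology

variable {E : Type*} [NormedAddCommGroup E] [NormedSpace ℂ E]

lemma norm_cexp_neg_mul_ofReal (w : ℂ) (x : ℝ) :
    ‖Complex.exp (-(w * x))‖ = Real.exp (-(w.re * x)) := by
  simp [norm_exp]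

lemma aestronglyMeasurable_of_exp_smul {f : ℝ → E} {a : ℝ} {μ : Measure ℝ}
    (hf : AEStronglyMeasurable (fun x ↦ Real.exp (-(a * x)) • f x) μ) :
    AEStronglyMeasurable f μ := by
  have hexp : Continuous fun x : ℝ ↦ Real.exp (a * x) := by fun_prop
  refine (hexp.aestronglyMeasurable.smul hf).congr (.of_forall fun x ↦ ?_)
  simp [smul_smul, ← Real.exp_add]

lemma integrableOn_cexp_neg_mul_smul {f : ℝ → E} {a : ℝ} {w : ℂ}
    (hf : IntegrableOn (fun x ↦ Real.exp (-(a * x)) • f x) (Ioi 0)) (hw : a ≤ w.re) :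
    IntegrableOn (fun x : ℝ ↦ Complex.exp (-(w * x)) • f x) (Ioi 0) := by
  have hexp : Continuous fun x : ℝ ↦ Complex.exp (-(w * x)) := by fun_prop
  refine Integrable.mono hf
    (hexp.aestronglyMeasurable.smul (aestronglyMeasurable_of_exp_smul hf.1)) ?_
  filter_upwards [ae_restrict_mem measurableSet_Ioi] with x (hx : 0 < x)
  rw [norm_smul, norm_smul, norm_cexp_neg_mul_ofReal, Real.norm_eq_abs, Real.abs_exp]
  gcongr

lemma norm_neg_mul_cexp_neg_mul_le {a b x : ℝ} {z : ℂ} (hab : a < b) (hz : b ≤ z.re)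
    (hx : 0 < x) :
    ‖-(x : ℂ) * Complex.exp (-(z * x))‖ ≤ (b - a)⁻¹ * Real.exp (-(a * x)) := by
  have hba : 0 < b - a := sub_pos.2 hab
  have hx_le : x ≤ (b - a)⁻¹ * Real.exp ((b - a) * x) := by
    rw [le_inv_mul_iff₀ hba]
    linarith [Real.add_one_le_exp ((b - a) * x)]
  calc ‖-(x : ℂ) * Complex.exp (-(z * x))‖ = x * Real.exp (-(z.re * x)) := by
        rw [norm_mul, norm_neg, norm_real, Real.norm_of_nonneg hx.le, norm_cexp_neg_mul_ofReal]
    _ ≤ ((b - a)⁻¹ * Real.exp ((b - a) * x)) * Real.exp (-(b * x)) := by gcongr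
    _ = (b - a)⁻¹ * Real.exp (-(a * x)) := by
        rw [mul_assoc, ← Real.exp_add]
        ring_nf

theorem differentiableAt_integral_cexp_neg_mul_smul {f : ℝ → E} {a : ℝ} {w : ℂ}
    (hf : IntegrableOn (fun x ↦ Real.exp (-(a * x)) • f x) (Ioi 0)) (hw : a < w.re) :
    DifferentiableAt ℂ (fun z : ℂ ↦ ∫ x : ℝ in Ioi 0, Complex.exp (-(z * x)) • f x) w := by
  obtain ⟨b, hab, hbw⟩ := exists_between hw
  have hf_meas := aestronglyMeasurable_of_exp_smul hf.1
  have hexp (z : ℂ) : Continuous fun x : ℝ ↦ Complex.exp (-(z * x)) := by fun_prop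
  have hexp' : Continuous fun x : ℝ ↦ -(x : ℂ) * Complex.exp (-(w * x)) := by fun_prop
  refine (hasDerivAt_integral_of_dominated_loc_of_deriv_le
    (F := fun z x ↦ Complex.exp (-(z * x)) • f x)
    (F' := fun z x ↦ (-(x : ℂ) * Complex.exp (-(z * x))) • f x)
    (bound := fun x ↦ (b - a)⁻¹ * ‖Real.exp (-(a * x)) • f x‖)
    ((isOpen_re_gt b).mem_nhds hbw)
    (.of_forall fun z ↦ (hexp z).aestronglyMeasurable.smul hf_meas)
    (integrableOn_cexp_neg_mul_smul hf hw.le)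
    (hexp'.aestronglyMeasurable.smul hf_meas) ?_ (hf.norm.const_mul _) ?_).2.differentiableAt
  · filter_upwards [ae_restrict_mem measurableSet_Ioi] with x hx z (hz : b < z.re)
    rw [norm_smul, norm_smul, Real.norm_eq_abs, Real.abs_exp, ← mul_assoc]
    gcongr
    exact norm_neg_mul_cexp_neg_mul_le hab hz.le hx
  · refine .of_forall fun x z _ ↦ ?_
    have hexponent : HasDerivAt (fun z : ℂ ↦ -(z * x)) (-(x : ℂ)) z :=
      (hasDerivAt_mul_const (x : ℂ)).fun_neg
    simpa only [mul_comm] using hexponent.cexp.smul_const (f x)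

theorem eqOn_re_pos_of_eq_ofReal [CompleteSpace E] {f g : ℂ → E}
    (hf : DifferentiableOn ℂ f {z | 0 < z.re}) (hg : DifferentiableOn ℂ g {z | 0 < z.re})
    (hfg : ∀ r : ℝ, 0 < r → f r = g r) : EqOn f g {z | 0 < z.re} := by
  have hopen : IsOpen {z : ℂ | 0 < z.re} := isOpen_re_gt 0
  refine (hf.analyticOnNhd hopen).eqOn_of_preconnected_of_frequently_eq (hg.analyticOnNhd hopen)
    (convex_halfSpace_re_gt 0).isPreconnected (z₀ := ((1 : ℝ) : ℂ)) (by simp) ?_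
  have hcoe : Tendsto ((↑) : ℝ → ℂ) (𝓝[≠] 1) (𝓝[≠] (1 : ℝ)) :=
    continuous_ofReal.continuousAt.continuousWithinAt.tendsto_nhdsWithin
      fun r hr ↦ ofReal_injective.ne hr
  have hpos : ∀ᶠ r : ℝ in 𝓝[≠] 1, 0 < r := nhdsWithin_le_nhds (lt_mem_nhds one_pos)
  exact hcoe.frequently (hpos.mono hfg).frequently

end Laplace

section Mellin

open MeasureTheory Set

theorem norm_mellin_le {E : Type*} [NormedAddCommGroup E] [NormedSpace ℂ E] (f : ℝ → E) (s : ℂ) :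
    ‖mellin f s‖ ≤ ∫ x in Ioi 0, x ^ (s.re - 1) * ‖f x‖ := by
  refine (norm_integral_le_integral_norm _).trans_eq ?_
  refine setIntegral_congr_fun measurableSet_Ioi fun x hx ↦ ?_
  simp only [norm_smul, norm_cpow_eq_rpow_re_of_pos hx, sub_re, one_re]

variable {s w : ℂ}

theorem mellinConvergent_cexp_neg_mul (hs : 0 < s.re) (hw : 0 < w.re) :
    MellinConvergent (fun x : ℝ ↦ Complex.exp (-(w * x))) s := by
  have hcont : Continuous fun x : ℝ ↦ Complex.exp (-(w * x)) := by fun_prop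
  refine (mellin_convergent_iff_norm Subset.rfl measurableSet_Ioi hcont.aestronglyMeasurable).2 ?_
  simpa only [norm_cexp_neg_mul_ofReal, Real.rpow_one, neg_mul] using
    integrableOn_rpow_mul_exp_neg_mul_rpow (s := s.re - 1) (by linarith) one_pos hw

theorem differentiableAt_mellin_cexp_neg_mul (hs : 0 < s.re) (hw : 0 < w.re) :
    DifferentiableAt ℂ (fun z : ℂ ↦ mellin (fun x : ℝ ↦ Complex.exp (-(z * x))) s) w := by
  obtain ⟨a, ha, haw⟩ := exists_between hw
  have hconv : IntegrableOn (fun x : ℝ ↦ Real.exp (-(a * x)) • (x : ℂ) ^ (s - 1)) (Ioi 0) := by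
    simpa [MellinConvergent, mul_comm] using mellinConvergent_cexp_neg_mul (w := a) hs (by simpa)
  simpa only [mellin, smul_eq_mul, mul_comm] using
    differentiableAt_integral_cexp_neg_mul_smul hconv haw

theorem mellin_cexp_neg_mul_ofReal (hs : 0 < s.re) {r : ℝ} (hr : 0 < r) :
    mellin (fun x : ℝ ↦ Complex.exp (-(r * x))) s = Complex.Gamma s * (r : ℂ) ^ (-s) := by
  have harg : (r : ℂ).arg ≠ Real.pi := by
    simpa only [arg_ofReal_of_nonneg hr.le] using Real.pi_ne_zero.symm
  simp only [mellin, smul_eq_mul]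
  rw [integral_cpow_mul_exp_neg_mul_Ioi hs hr, one_div, inv_cpow _ _ harg, cpow_neg, mul_comm]

theorem mellin_cexp_neg_mul (hs : 0 < s.re) (hw : 0 < w.re) :
    mellin (fun x : ℝ ↦ Complex.exp (-(w * x))) s = Complex.Gamma s * w ^ (-s) :=
  eqOn_re_pos_of_eq_ofReal
    (fun _ hz ↦ (differentiableAt_mellin_cexp_neg_mul hs hz).differentiableWithinAt)
    (fun _ hz ↦ ((differentiableAt_id.cpow_const (.inl hz)).const_mul _).differentiableWithinAt)
    (fun _ hr ↦ mellin_cexp_neg_mul_ofReal hs hr) hw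

end Mellin

section VerticalDecay

open MeasureTheory Set

variable {s w : ℂ}

lemma norm_cpow_neg_of_ne_zero (hw : w ≠ 0) (s : ℂ) :
    ‖w ^ (-s)‖ = ‖w‖ ^ (-s.re) * Real.exp (w.arg * s.im) := by
  rw [norm_cpow_of_ne_zero hw, neg_re, neg_im, mul_neg, Real.exp_neg, div_inv_eq_mul]

theorem norm_Gamma_mul_cpow_neg_le (hs : 0 < s.re) (hw : 0 < w.re) :
    ‖Complex.Gamma s * w ^ (-s)‖ ≤ (1 / w.re) ^ s.re * Real.Gamma s.re := by
  rw [← mellin_cexp_neg_mul hs hw, ← Real.integral_rpow_mul_exp_neg_mul_Ioi hs hw]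
  simpa only [norm_cexp_neg_mul_ofReal] using
    norm_mellin_le (fun x : ℝ ↦ Complex.exp (-(w * x))) s

theorem norm_Gamma_le_mul_exp (hs : 0 < s.re) {θ : ℝ}
    (hθ : θ ∈ Ioo (-(Real.pi / 2)) (Real.pi / 2)) :
    ‖Complex.Gamma s‖ ≤ (1 / Real.cos θ) ^ s.re * Real.Gamma s.re * Real.exp (-(θ * s.im)) := by
  have hre : (Complex.exp (θ * I)).re = Real.cos θ := exp_ofReal_mul_I_re θ
  have harg : (Complex.exp (θ * I)).arg = θ := by
    rw [arg_exp_mul_I, toIocMod_eq_self]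
    constructor <;> linarith [hθ.1, hθ.2, Real.pi_pos]
  have hnorm : ‖Complex.exp (θ * I) ^ (-s)‖ = Real.exp (θ * s.im) := by
    rw [norm_cpow_neg_of_ne_zero (exp_ne_zero _), norm_exp_ofReal_mul_I, harg, Real.one_rpow,
      one_mul]
  have hbound := norm_Gamma_mul_cpow_neg_le hs (hre ▸ Real.cos_pos_of_mem_Ioo hθ)
  rwa [norm_mul, hnorm, hre, ← le_div_iff₀ (Real.exp_pos _), div_eq_mul_inv, ← Real.exp_neg]
    at hbound

theorem norm_Gamma_mul_cpow_neg_le_mul_exp (hs : 0 < s.re) (hw : w ≠ 0) {θ : ℝ}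
    (hθ : θ ∈ Ioo (-(Real.pi / 2)) (Real.pi / 2)) :
    ‖Complex.Gamma s * w ^ (-s)‖ ≤ (1 / Real.cos θ) ^ s.re * Real.Gamma s.re * ‖w‖ ^ (-s.re) *
      Real.exp ((w.arg - θ) * s.im) :=
  calc ‖Complex.Gamma s * w ^ (-s)‖
      = ‖Complex.Gamma s‖ * (‖w‖ ^ (-s.re) * Real.exp (w.arg * s.im)) := by
        rw [norm_mul, norm_cpow_neg_of_ne_zero hw]
    _ ≤ ((1 / Real.cos θ) ^ s.re * Real.Gamma s.re * Real.exp (-(θ * s.im))) *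
        (‖w‖ ^ (-s.re) * Real.exp (w.arg * s.im)) := by
        gcongr
        exact norm_Gamma_le_mul_exp hs hθ
    _ = _ := by
        rw [sub_mul, sub_eq_neg_add, Real.exp_add]
        ring

lemma measurable_complex_Gamma : Measurable Complex.Gamma := by
  simpa only [inv_inv] using differentiable_one_div_Gamma.continuous.measurable.fun_inv

theorem verticalIntegrable_Gamma_mul_cpow_neg {c : ℝ} (hc : 0 < c) (hw : 0 < w.re) :
    VerticalIntegrable (fun s ↦ Complex.Gamma s * w ^ (-s)) c := by
  have hw0 : w ≠ 0 := ne_zero_of_re_pos hw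
  have harg : w.arg ∈ Ioo (-(Real.pi / 2)) (Real.pi / 2) :=
    abs_lt.1 (abs_arg_lt_pi_div_two_iff.2 (.inl hw))
  have hmeas : Measurable fun t : ℝ ↦
      Complex.Gamma (c + t * I) * w ^ (-((c : ℂ) + t * I)) :=
    (measurable_complex_Gamma.comp (by fun_prop)).mul
      (Continuous.const_cpow (by fun_prop) (.inl hw0)).measurable
  have hbound {θ : ℝ} (hθ : θ ∈ Ioo (-(Real.pi / 2)) (Real.pi / 2)) (t : ℝ) :
      ‖Complex.Gamma (c + t * I) * w ^ (-((c : ℂ) + t * I))‖ ≤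
        (1 / Real.cos θ) ^ c * Real.Gamma c * ‖w‖ ^ (-c) * Real.exp ((w.arg - θ) * t) := by
    simpa using norm_Gamma_mul_cpow_neg_le_mul_exp (s := c + t * I) (by simpa) hw0 hθ
  obtain ⟨θ₁, hθ₁, hθ₁w⟩ := exists_between harg.1
  obtain ⟨θ₂, hθ₂w, hθ₂⟩ := exists_between harg.2
  rw [VerticalIntegrable, ← integrableOn_univ, ← Iic_union_Ioi (a := (0 : ℝ)), integrableOn_union]
  constructor
  · exact ((integrableOn_exp_mul_Iic (sub_pos.2 hθ₁w) 0).const_mul _).mono'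
      hmeas.aestronglyMeasurable (.of_forall (hbound ⟨hθ₁, hθ₁w.trans harg.2⟩))
  · exact ((integrableOn_exp_mul_Ioi (sub_neg.2 hθ₂w) 0).const_mul _).mono'
      hmeas.aestronglyMeasurable (.of_forall (hbound ⟨harg.1.trans hθ₂w, hθ₂⟩))

end VerticalDecay

theorem mellinInv_Gamma_mul_cpow_neg {w : ℂ} (hw : 0 < w.re) {c : ℝ} (hc : 0 < c) {x : ℝ}
    (hx : 0 < x) :
    mellinInv c (fun s ↦ Complex.Gamma s * w ^ (-s)) x = Complex.exp (-(w * x)) := by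
  have hmellin (t : ℝ) : mellin (fun x : ℝ ↦ Complex.exp (-(w * x))) (c + t * I) =
      Complex.Gamma (c + t * I) * w ^ (-((c : ℂ) + t * I)) :=
    mellin_cexp_neg_mul (by simpa) hw
  have hinv := mellinInv_mellin_eq c (fun x : ℝ ↦ Complex.exp (-(w * x))) hx
    (mellinConvergent_cexp_neg_mul (by simpa) hw)
    (by simpa only [VerticalIntegrable, hmellin] using verticalIntegrable_Gamma_mul_cpow_neg hc hw)
    (by fun_prop)
  simpa only [mellinInv, hmellin] using hinv

/-- Cahen–Mellin formula: the vertical line `Re s = c` is parametrized by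
`s = c + i t`, so that `(1/(2πi)) ∫ ds = (1/(2π)) ∫ dt`. -/
theorem stmt_8 (w : ℂ) (hw : 0 < w.re) (c : ℝ) (hc : 0 < c) :
    (1 / (2 * Real.pi) : ℂ) *
        (∫ t : ℝ, Complex.Gamma (c + t * I) * w ^ (-((c : ℂ) + t * I))) =
      Complex.exp (-w) := by
  simpa [mellinInv] using mellinInv_Gamma_mul_cpow_neg hw hc one_pos
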